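/- arXiv:2106.09808 — 5 statements merged into one kernel-verified Lean document; each statement's English description precedes it below -/
import Mathlib

section
/- Let A and U be nonempty sets with the discrete topology, let X ⊆ A^ℤ be a shift space, let B be a barrier on X and let φ : B → U be a local rule. Then the extended sliding block code Ψ : X → U^ℤ induced by φ (i.e., Ψ(x)_n = φ(B_n(x)), where B_n(x) is the member of B containing σ^n(x)) is continuous and shift-commuting, that is, Ψ ∘ σ = σ ∘ Ψ, where σ denotes the shift map on A^ℤ and on U^ℤ respectively. -/
open Filter Topology Set

namespace ShiftPaper

/-- The shift map `σ` on the full shift `A^ℤ`: `σ(x)_n = x_{n+1}`. -/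
def shiftMap {A : Type*} (x : ℤ → A) : ℤ → A := fun n => x (n + 1)

/-- The `n`-th iterate of the shift: `σ^n(x)_m = x_{m+n}` (for `n : ℤ`). -/
def shiftIter {A : Type*} (n : ℤ) (x : ℤ → A) : ℤ → A := fun m => x (m + n)

/-- A shift space: a nonempty closed shift-invariant subset of the full shift. -/
def IsShiftSpace {A : Type*} [TopologicalSpace A] (X : Set (ℤ → A)) : Prop :=
  X.Nonempty ∧ IsClosed X ∧ shiftMap '' X = X

/-- The cylinder in `X` determined by the finite set `s ⊆ ℤ` and the values of `h` on `s`: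
`C_X(h) = X ∩ {x : x_i = h_i for all i ∈ s}`. -/
def cylX {A : Type*} (X : Set (ℤ → A)) (s : Finset ℤ) (h : ℤ → A) : Set (ℤ → A) :=
  X ∩ {x | ∀ i ∈ s, x i = h i}

/-- A barrier on `X`: a partition of `X` all of whose members are nonempty cylinders in `X`. -/
def IsBarrier {A : Type*} (X : Set (ℤ → A)) (B : Set (Set (ℤ → A))) : Prop :=
  (∀ C ∈ B, C.Nonempty ∧ ∃ (s : Finset ℤ) (h : ℤ → A), C = cylX X s h) ∧
  (∀ x ∈ X, ∃! C, C ∈ B ∧ x ∈ C)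

/-- `Ψ` is induced by the local rule `φ` on the barrier `B`:
`Ψ(x)_n = φ(C)` whenever `C ∈ B` contains `σ^n(x)`. -/
def InducedBy {A U : Type*} (X : Set (ℤ → A)) (Ψ : (ℤ → A) → ℤ → U)
    (B : Set (Set (ℤ → A))) (φ : Set (ℤ → A) → U) : Prop :=
  ∀ x ∈ X, ∀ n : ℤ, ∀ C ∈ B, shiftIter n x ∈ C → Ψ x n = φ C

/-- `Ψ` is an extended sliding block code on `X`. -/
def IsESBC {A U : Type*} (X : Set (ℤ → A)) (Ψ : (ℤ → A) → ℤ → U) : Prop :=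
  ∃ (B : Set (Set (ℤ → A))) (φ : Set (ℤ → A) → U), IsBarrier X B ∧ InducedBy X Ψ B φ

/-- `Ψ` is an extended sliding block code of finite degree: it is induced by a local rule `φ`
on a barrier `B` (so `B` is attached to `Ψ`) such that for each symbol `u` only finitely many
members of `B` have `φ`-value (i.e. `Ψ₀`-value) `u`. -/
def IsFiniteDegreeESBC {A U : Type*} (X : Set (ℤ → A)) (Ψ : (ℤ → A) → ℤ → U) : Prop :=
  ∃ (B : Set (Set (ℤ → A))) (φ : Set (ℤ → A) → U), IsBarrier X B ∧ InducedBy X Ψ B φ ∧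
    ∀ u : U, {C | C ∈ B ∧ φ C = u}.Finite

/-- The data produced by the crucial lemma for a distinguished sequence `x` with
`Ψ(x^k) → y`: a sequence of partial functions `h_ℓ` (with finite domains `s_ℓ`, each
extending the previous one) and a decreasing sequence `S_ℓ` of infinite subsets of `ℕ`,
such that `x^k ∈ C_X(h_ℓ)` for `k ∈ S_ℓ` and `Ψ(z)|_{[-ℓ,ℓ]} = y|_{[-ℓ,ℓ]}` on `C_X(h_ℓ)`. -/
def AssocData {A U : Type*} (X : Set (ℤ → A)) (Ψ : (ℤ → A) → ℤ → U)
    (x : ℕ → ℤ → A) (y : ℤ → U)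
    (s : ℕ → Finset ℤ) (h : ℕ → ℤ → A) (S : ℕ → Set ℕ) : Prop :=
  (∀ ℓ : ℕ, s ℓ ⊆ s (ℓ + 1)) ∧
  (∀ ℓ : ℕ, ∀ i ∈ s ℓ, h (ℓ + 1) i = h ℓ i) ∧
  (∀ ℓ : ℕ, (S ℓ).Infinite) ∧
  (∀ ℓ : ℕ, S (ℓ + 1) ⊆ S ℓ) ∧
  (∀ ℓ : ℕ, ∀ k ∈ S ℓ, x k ∈ cylX X (s ℓ) (h ℓ)) ∧
  (∀ ℓ : ℕ, ∀ z ∈ cylX X (s ℓ) (h ℓ), ∀ j : ℤ, |j| ≤ (ℓ : ℤ) → Ψ z j = y j)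

/-- The symbol `a` belongs to `L₁(X)`: it appears in some point of `X`. -/
def inLetter {A : Type*} (X : Set (ℤ → A)) (a : A) : Prop :=
  ∃ x ∈ X, ∃ i : ℤ, x i = a

/-- The two-letter word `ab` belongs to the language `L(X)`. -/
def inLang2 {A : Type*} (X : Set (ℤ → A)) (a b : A) : Prop :=
  ∃ x ∈ X, ∃ i : ℤ, x i = a ∧ x (i + 1) = b

/-- `X` is right-finite: for each allowed symbol `a`, only finitely many `b` with `ab ∈ L(X)`. -/
def RightFinite {A : Type*} (X : Set (ℤ → A)) : Prop :=
  ∀ a : A, inLetter X a → {b : A | inLang2 X a b}.Finite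

/-- `X` is left-finite: for each allowed symbol `a`, only finitely many `b` with `ba ∈ L(X)`. -/
def LeftFinite {A : Type*} (X : Set (ℤ → A)) : Prop :=
  ∀ a : A, inLetter X a → {b : A | inLang2 X b a}.Finite

end ShiftPaper

open ShiftPaper

/-! Shifting into position `0` gives `Ψ(x)_n = Ψ(σⁿ x)_0`. This identity yields commutation with
the shift, and reduces continuity to that of the coordinate `x ↦ Ψ(x)_0`. That coordinate is
locally constant, since it is constant on each member of the barrier and cylinders are open. -/

namespace ShiftPaper

section Shift

variable {A : Type*}

theorem shiftIter_zero (x : ℤ → A) : shiftIter 0 x = x :=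
  funext fun k => congrArg x (add_zero k)

theorem shiftIter_shiftIter (m n : ℤ) (x : ℤ → A) :
    shiftIter m (shiftIter n x) = shiftIter (m + n) x :=
  funext fun k => congrArg x (add_assoc k m n)

theorem shiftIter_one (x : ℤ → A) : shiftIter 1 x = shiftMap x := rfl

theorem continuous_shiftIter [TopologicalSpace A] (n : ℤ) :
    Continuous (shiftIter n : (ℤ → A) → ℤ → A) :=
  continuous_pi fun k => continuous_apply (k + n)

theorem mapsTo_shiftIter {X : Set (ℤ → A)} (hX : shiftMap '' X = X) (n : ℤ) :
    MapsTo (shiftIter n) X X := by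
  have forward : MapsTo (shiftIter 1) X X := mapsTo_iff_image_subset.2 hX.subset
  have backward : MapsTo (shiftIter (-1)) X X := by
    intro x hx
    obtain ⟨y, hy, rfl⟩ := hX.superset hx
    rwa [← shiftIter_one, shiftIter_shiftIter, neg_add_cancel, shiftIter_zero]
  induction n using Int.induction_on with
  | zero => exact fun x hx => (shiftIter_zero x).symm ▸ hx
  | succ k ih =>
    intro x hx
    rw [add_comm, ← shiftIter_shiftIter]
    exact forward (ih hx)
  | pred k ih =>
    intro x hx
    rw [sub_eq_neg_add, ← shiftIter_shiftIter]
    exact backward (ih hx)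

end Shift

section Barrier

variable {A : Type*} {X : Set (ℤ → A)} {B : Set (Set (ℤ → A))}

theorem isOpen_preimage_val_cylX [TopologicalSpace A] [DiscreteTopology A]
    (X : Set (ℤ → A)) (s : Finset ℤ) (h : ℤ → A) :
    IsOpen ((↑) ⁻¹' cylX X s h : Set X) := by
  have isOpen_cylinder : IsOpen ((s : Set ℤ).pi fun i => {h i}) :=
    isOpen_set_pi s.finite_toSet fun i _ => isOpen_discrete {h i}
  rw [cylX, Subtype.preimage_coe_self_inter]
  exact isOpen_cylinder.preimage continuous_subtype_val

theorem IsBarrier.isOpen_preimage_val [TopologicalSpace A] [DiscreteTopology A]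
    (hB : IsBarrier X B) {C : Set (ℤ → A)} (hC : C ∈ B) : IsOpen ((↑) ⁻¹' C : Set X) := by
  obtain ⟨-, s, h, rfl⟩ := hB.1 C hC
  exact isOpen_preimage_val_cylX X s h

theorem IsBarrier.subset_sUnion (hB : IsBarrier X B) : X ⊆ ⋃₀ B :=
  fun x hx => (hB.2 x hx).exists

end Barrier

namespace InducedBy

variable {A U : Type*} {X : Set (ℤ → A)} {Ψ : (ℤ → A) → ℤ → U} {B : Set (Set (ℤ → A))}
  {φ : Set (ℤ → A) → U}

theorem apply_zero_eq (hΨ : InducedBy X Ψ B φ) {C : Set (ℤ → A)} (hC : C ∈ B) {x : ℤ → A}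
    (hx : x ∈ X) (hxC : x ∈ C) : Ψ x 0 = φ C :=
  hΨ x hx 0 C hC ((shiftIter_zero x).symm ▸ hxC)

theorem apply_eq_apply_shiftIter_zero (hΨ : InducedBy X Ψ B φ) (hX : shiftMap '' X = X)
    (hcover : X ⊆ ⋃₀ B) {x : ℤ → A} (hx : x ∈ X) (n : ℤ) :
    Ψ x n = Ψ (shiftIter n x) 0 := by
  have hnx : shiftIter n x ∈ X := mapsTo_shiftIter hX n hx
  obtain ⟨C, hC, hnxC⟩ := hcover hnx
  exact (hΨ x hx n C hC hnxC).trans (hΨ.apply_zero_eq hC hnx hnxC).symm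

theorem apply_shiftMap (hΨ : InducedBy X Ψ B φ) (hX : shiftMap '' X = X)
    (hcover : X ⊆ ⋃₀ B) {x : ℤ → A} (hx : x ∈ X) :
    Ψ (shiftMap x) = shiftMap (Ψ x) := by
  have hσx : shiftMap x ∈ X := hX.subset (mem_image_of_mem shiftMap hx)
  funext n
  calc Ψ (shiftMap x) n
      = Ψ (shiftIter n (shiftMap x)) 0 := hΨ.apply_eq_apply_shiftIter_zero hX hcover hσx n
    _ = Ψ (shiftIter (n + 1) x) 0 := by rw [← shiftIter_one, shiftIter_shiftIter]
    _ = Ψ x (n + 1) := (hΨ.apply_eq_apply_shiftIter_zero hX hcover hx (n + 1)).symm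

variable [TopologicalSpace A] [TopologicalSpace U]

theorem continuousOn_apply_zero (hΨ : InducedBy X Ψ B φ)
    (hopen : ∀ C ∈ B, IsOpen ((↑) ⁻¹' C : Set X)) (hcover : X ⊆ ⋃₀ B) :
    ContinuousOn (fun x => Ψ x 0) X := by
  intro x hx
  obtain ⟨C, hC, hxC⟩ := hcover hx
  have hC_nhds : C ∈ 𝓝[X] x :=
    preimage_coe_mem_nhds_subtype.1 ((hopen C hC).mem_nhds (x := ⟨x, hx⟩) hxC)
  have hconst : (fun z => Ψ z 0) =ᶠ[𝓝[X] x] fun _ => φ C := by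
    filter_upwards [hC_nhds, self_mem_nhdsWithin] with z hzC hz
    exact hΨ.apply_zero_eq hC hz hzC
  exact continuousWithinAt_const.congr_of_eventuallyEq hconst (hΨ.apply_zero_eq hC hx hxC)

theorem continuousOn (hΨ : InducedBy X Ψ B φ) (hX : shiftMap '' X = X)
    (hopen : ∀ C ∈ B, IsOpen ((↑) ⁻¹' C : Set X)) (hcover : X ⊆ ⋃₀ B) :
    ContinuousOn Ψ X :=
  continuousOn_pi.2 fun n =>
    ((hΨ.continuousOn_apply_zero hopen hcover).comp (continuous_shiftIter n).continuousOn
      (mapsTo_shiftIter hX n)).congr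
        fun _ hx => hΨ.apply_eq_apply_shiftIter_zero hX hcover hx n

end InducedBy

end ShiftPaper

theorem esbc_continuous_and_shift_commuting_general
    {A U : Type*} [TopologicalSpace A] [TopologicalSpace U]
    {X : Set (ℤ → A)} (hX : shiftMap '' X = X)
    {B : Set (Set (ℤ → A))} (hopen : ∀ C ∈ B, IsOpen ((↑) ⁻¹' C : Set X)) (hcover : X ⊆ ⋃₀ B)
    {φ : Set (ℤ → A) → U} {Ψ : (ℤ → A) → ℤ → U} (hΨ : InducedBy X Ψ B φ) :
    ContinuousOn Ψ X ∧ ∀ x ∈ X, Ψ (shiftMap x) = shiftMap (Ψ x) :=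
  ⟨hΨ.continuousOn hX hopen hcover, fun _ hx => hΨ.apply_shiftMap hX hcover hx⟩

/-- the extended sliding block code induced by a local rule on a barrier is
continuous and shift-commuting. -/
theorem esbc_continuous_and_shift_commuting
    {A U : Type*} [TopologicalSpace A] [DiscreteTopology A] [Nonempty A]
    [TopologicalSpace U] [DiscreteTopology U] [Nonempty U]
    (X : Set (ℤ → A)) (hX : IsShiftSpace X)
    (B : Set (Set (ℤ → A))) (hB : IsBarrier X B)
    (φ : Set (ℤ → A) → U) (Ψ : (ℤ → A) → ℤ → U)
    (hΨ : InducedBy X Ψ B φ) :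
    ContinuousOn Ψ X ∧ ∀ x ∈ X, Ψ (shiftMap x) = shiftMap (Ψ x) :=
  esbc_continuous_and_shift_commuting_general hX.2.2 (fun _ hC => hB.isOpen_preimage_val hC)
    hB.subset_sUnion hΨ
end

section
/- Let A and U be nonempty sets with the discrete topology, let X ⊆ A^ℤ be a shift space that is right-finite or left-finite, and let Ψ : X → U^ℤ be an extended sliding block code of finite degree. Let (x^k)_{k≥1} be a sequence in X with Ψ(x^k) → y in U^ℤ, and suppose there exist a sequence of A-valued functions (h_ℓ)_{ℓ≥0} on finite subsets of ℤ with h_{ℓ+1} extending h_ℓ, and a decreasing sequence (S_ℓ)_{ℓ≥0} of infinite subsets of ℕ, such that for every ℓ ≥ 0 one has x^k ∈ C_X(h_ℓ) for all k ∈ S_ℓ and Ψ(z)_j = y_j for every z ∈ C_X(h_ℓ) and |j| ≤ ℓ, and such that the set D = ⋃_{ℓ≥0} dom(h_ℓ) is a proper subset of ℤ that is unbounded above and unbounded below. Then (x^k)_{k≥1} has a convergent subsequence. -/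
open Filter Topology Set

open ShiftPaper

/-!
Follow the infinite sets `S ℓ` diagonally to get a subsequence that eventually lies in each
cylinder `C_X(h ℓ)`, so each coordinate in `D` is eventually constant along it. If `X` is
right-finite, then a coordinate `d ∈ D` to the left of `n` pins down the letter at `n` up to
finitely many choices, since a letter has finitely many successors and `n - d` steps lead from `d`
to `n`; left-finiteness plays the same role from the right. As `D` is unbounded on both sides, every
coordinate takes finitely many values along the subsequence, and compactness of a product of finite
sets gives a convergent further subsequence.
-/

namespace ShiftPaper

theorem finite_image_of_rel {α β : Type*} {T : Set α} {f g : α → β} {r : β → β → Prop}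
    (hf : (f '' T).Finite) (hr : ∀ a ∈ T, {b | r (f a) b}.Finite)
    (hfg : ∀ a ∈ T, r (f a) (g a)) : (g '' T).Finite := by
  refine (hf.biUnion (forall_mem_image.2 hr)).subset ?_
  rintro _ ⟨a, ha, rfl⟩
  exact mem_biUnion (mem_image_of_mem f ha) (hfg a ha)

theorem exists_strictMono_forall_finite_range {ι : Type*} {A : ι → Type*} {x : ℕ → ∀ i, A i}
    {S : ℕ → Set ℕ} (hS : Antitone S) (hinf : ∀ ℓ, (S ℓ).Infinite)
    (hfin : ∀ i, ∃ ℓ, ((fun k => x k i) '' S ℓ).Finite) :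
    ∃ ψ : ℕ → ℕ, StrictMono ψ ∧ ∀ i, (range fun k => x (ψ k) i).Finite := by
  obtain ⟨ψ, hψ, hψS⟩ := extraction_forall_of_frequently
    fun ℓ => Nat.frequently_atTop_iff_infinite.2 (hinf ℓ)
  refine ⟨ψ, hψ, fun i => ?_⟩
  obtain ⟨ℓ, hℓ⟩ := hfin i
  have hhead : ((fun k => x (ψ k) i) '' Iio ℓ).Finite := (finite_Iio ℓ).image _
  refine (hhead.union hℓ).subset ?_
  rintro _ ⟨k, rfl⟩
  rcases lt_or_ge k ℓ with hk | hk
  · exact .inl (mem_image_of_mem _ hk)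
  · exact .inr ⟨ψ k, hS hk (hψS k), rfl⟩

theorem exists_strictMono_forall_eventually_eq {ι : Type*} [Countable ι] {A : ι → Type*}
    {x : ℕ → ∀ i, A i} (hfin : ∀ i, (range fun k => x k i).Finite) :
    ∃ θ : ℕ → ℕ, StrictMono θ ∧ ∃ z : ∀ i, A i, ∀ i, ∀ᶠ k in atTop, x (θ k) i = z i := by
  let (i : ι) : TopologicalSpace (A i) := ⊥
  have (i : ι) : DiscreteTopology (A i) := ⟨rfl⟩
  have hcompact : IsCompact (univ.pi fun i => range fun k => x k i) :=
    isCompact_univ_pi fun i => (hfin i).isCompact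
  obtain ⟨z, -, θ, hθ, hlim⟩ :=
    hcompact.tendsto_subseq (x := x) fun k i _ => mem_range_self k
  refine ⟨θ, hθ, z, fun i => ?_⟩
  exact tendsto_pure.1 (nhds_discrete (A i) ▸ tendsto_pi_nhds.1 hlim i)

section Finiteness

variable {A : Type*} {X T : Set (ℤ → A)} {d n : ℤ}

theorem finite_image_eval_cylX {s : Finset ℤ} {h : ℤ → A} (hd : d ∈ s) :
    (Function.eval d '' cylX X s h).Finite :=
  (finite_singleton (h d)).subset <| image_subset_iff.2 fun _ hz => hz.2 d hd

theorem RightFinite.finite_image_eval (hX : RightFinite X) (hT : T ⊆ X) (hdn : d ≤ n)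
    (hd : (Function.eval d '' T).Finite) : (Function.eval n '' T).Finite := by
  induction n, hdn using Int.leInduction with
  | base => exact hd
  | succ n _ ih =>
    exact finite_image_of_rel (r := inLang2 X) ih (fun z hz => hX _ ⟨z, hT hz, n, rfl⟩)
      fun z hz => ⟨z, hT hz, n, rfl, rfl⟩

theorem LeftFinite.finite_image_eval (hX : LeftFinite X) (hT : T ⊆ X) (hnd : n ≤ d)
    (hd : (Function.eval d '' T).Finite) : (Function.eval n '' T).Finite := by
  induction n, hnd using Int.leInductionDown with
  | base => exact hd
  | pred n _ ih =>
    exact finite_image_of_rel (r := fun a b => inLang2 X b a) ih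
      (fun z hz => hX _ ⟨z, hT hz, n, rfl⟩)
      fun z hz => ⟨z, hT hz, n - 1, rfl, by simp only [sub_add_cancel, Function.eval]⟩

variable {ι : Type*} {s : ι → Finset ℤ} {h : ι → ℤ → A}

theorem RightFinite.exists_finite_image_eval_cylX (hX : RightFinite X)
    (hs : ¬ BddBelow (⋃ ℓ, (s ℓ : Set ℤ))) (n : ℤ) :
    ∃ ℓ, (Function.eval n '' cylX X (s ℓ) (h ℓ)).Finite := by
  obtain ⟨d, hd, hdn⟩ := not_bddBelow_iff.1 hs n
  obtain ⟨ℓ, hdℓ⟩ := mem_iUnion.1 hd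
  exact ⟨ℓ, hX.finite_image_eval inter_subset_left hdn.le (finite_image_eval_cylX hdℓ)⟩

theorem LeftFinite.exists_finite_image_eval_cylX (hX : LeftFinite X)
    (hs : ¬ BddAbove (⋃ ℓ, (s ℓ : Set ℤ))) (n : ℤ) :
    ∃ ℓ, (Function.eval n '' cylX X (s ℓ) (h ℓ)).Finite := by
  obtain ⟨d, hd, hnd⟩ := not_bddAbove_iff.1 hs n
  obtain ⟨ℓ, hdℓ⟩ := mem_iUnion.1 hd
  exact ⟨ℓ, hX.finite_image_eval inter_subset_left hnd.le (finite_image_eval_cylX hdℓ)⟩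

end Finiteness

end ShiftPaper

theorem nice_of_C3_general {A : Type*} [TopologicalSpace A] {X : Set (ℤ → A)}
    {x : ℕ → ℤ → A} {s : ℕ → Finset ℤ} {h : ℕ → ℤ → A} {S : ℕ → Set ℕ}
    (hS : Antitone S) (hinf : ∀ ℓ, (S ℓ).Infinite)
    (hcyl : ∀ ℓ, ∀ k ∈ S ℓ, x k ∈ cylX X (s ℓ) (h ℓ))
    (hXD : RightFinite X ∧ ¬ BddBelow (⋃ ℓ, (s ℓ : Set ℤ)) ∨
      LeftFinite X ∧ ¬ BddAbove (⋃ ℓ, (s ℓ : Set ℤ))) :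
    ∃ φ : ℕ → ℕ, StrictMono φ ∧ ∃ z : ℤ → A,
      Tendsto (fun k => x (φ k)) atTop (𝓝 z) := by
  have hfin_cyl (n : ℤ) : ∃ ℓ, (Function.eval n '' cylX X (s ℓ) (h ℓ)).Finite := by
    rcases hXD with ⟨hX, hbelow⟩ | ⟨hX, habove⟩
    · exact hX.exists_finite_image_eval_cylX hbelow n
    · exact hX.exists_finite_image_eval_cylX habove n
  have hfin (n : ℤ) : ∃ ℓ, ((fun k => x k n) '' S ℓ).Finite :=
    (hfin_cyl n).imp fun ℓ hℓ => hℓ.subset <|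
      image_subset_iff.2 fun k hk => mem_image_of_mem (Function.eval n) (hcyl ℓ k hk)
  obtain ⟨ψ, hψ, hrange⟩ := exists_strictMono_forall_finite_range hS hinf hfin
  obtain ⟨θ, hθ, z, hz⟩ := exists_strictMono_forall_eventually_eq hrange
  exact ⟨ψ ∘ θ, hψ.comp hθ, z, tendsto_pi_nhds.2 fun n => tendsto_nhds_of_eventually_eq (hz n)⟩

/-- STATEMENT 5 (Lemma 3.2 a) of the paper): for a right-finite or left-finite shift space
`X` and a finite degree ESBC `Ψ`, a distinguished sequence admitting associated data whose
total domain `D` is a proper subset of `ℤ` unbounded above and below (class C3) has a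
convergent subsequence. -/
theorem nice_of_C3
    {A U : Type*} [TopologicalSpace A] [DiscreteTopology A] [Nonempty A]
    [TopologicalSpace U] [DiscreteTopology U] [Nonempty U]
    (X : Set (ℤ → A)) (hX : IsShiftSpace X)
    (hRL : RightFinite X ∨ LeftFinite X)
    (Ψ : (ℤ → A) → ℤ → U) (hΨ : IsFiniteDegreeESBC X Ψ)
    (x : ℕ → ℤ → A) (hx : ∀ k, x k ∈ X)
    (y : ℤ → U) (hconv : Tendsto (fun k => Ψ (x k)) atTop (𝓝 y))
    (s : ℕ → Finset ℤ) (h : ℕ → ℤ → A) (S : ℕ → Set ℕ)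
    (hdata : AssocData X Ψ x y s h S)
    (hD : (⋃ ℓ, (s ℓ : Set ℤ)) ≠ Set.univ ∧
      ¬ BddAbove (⋃ ℓ, (s ℓ : Set ℤ)) ∧ ¬ BddBelow (⋃ ℓ, (s ℓ : Set ℤ))) :
    ∃ φ : ℕ → ℕ, StrictMono φ ∧ ∃ z : ℤ → A,
      Tendsto (fun k => x (φ k)) atTop (𝓝 z) := by
  obtain ⟨-, -, hinf, hdec, hcyl, -⟩ := hdata
  exact nice_of_C3_general (antitone_nat_of_succ_le hdec) hinf hcyl
    (hRL.imp (fun hR => ⟨hR, hD.2.2⟩) fun hL => ⟨hL, hD.2.1⟩)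
end

section
/- Let A and U be nonempty sets with the discrete topology, let X ⊆ A^ℤ be a right-finite shift space, and let Ψ : X → U^ℤ be an extended sliding block code of finite degree. Let (x^k)_{k≥1} be a sequence in X with Ψ(x^k) → y in U^ℤ, and suppose there exist a sequence of A-valued functions (h_ℓ)_{ℓ≥0} on finite subsets of ℤ with h_{ℓ+1} extending h_ℓ, and a decreasing sequence (S_ℓ)_{ℓ≥0} of infinite subsets of ℕ, such that for every ℓ ≥ 0 one has x^k ∈ C_X(h_ℓ) for all k ∈ S_ℓ and Ψ(z)_j = y_j for every z ∈ C_X(h_ℓ) and |j| ≤ ℓ, and such that the set D = ⋃_{ℓ≥0} dom(h_ℓ) is unbounded below and bounded above in ℤ. Then (x^k)_{k≥1} has a convergent subsequence. -/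
open Filter Topology Set

open ShiftPaper

/-!
A right-finite space propagates finiteness to the right: if only finitely many symbols occur at
coordinate `d` along a family of points, the same holds at `d + 1`, hence at every later coordinate.
Along a diagonal subsequence with `k n ∈ S n`, each coordinate in the domain of some `h ℓ` is
eventually constant. These coordinates are unbounded below, so *every* coordinate has one of them
to its left and takes only finitely many values. The subsequence therefore lies in a product of
countably many finite sets, and compactness applies.
-/

namespace ShiftPaper

theorem finite_range_of_eventually_cofinite_eq {ι α : Type*} {f : ι → α} {a : α}
    (hf : ∀ᶠ i in cofinite, f i = a) : (range f).Finite := by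
  refine ((Finite.image f hf).insert a).subset ?_
  rintro _ ⟨i, rfl⟩
  by_cases hi : f i = a
  · exact Or.inl hi
  · exact Or.inr ⟨i, hi, rfl⟩

theorem exists_subseq_tendsto_of_finite_range {ι A : Type*} [Countable ι] [TopologicalSpace A]
    {x : ℕ → ι → A} (hfin : ∀ i, (range fun n => x n i).Finite) :
    ∃ φ : ℕ → ℕ, StrictMono φ ∧ ∃ z : ι → A, Tendsto (fun n => x (φ n)) atTop (𝓝 z) := by
  -- In the discrete topology, convergence is eventual constancy of each coordinate, which
  -- implies convergence in the given topology, first countable or not.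
  obtain ⟨φ, hφ, z, hz⟩ : ∃ φ : ℕ → ℕ, StrictMono φ ∧
      ∃ z : ι → A, ∀ i, ∀ᶠ n in atTop, x (φ n) i = z i := by
    let : TopologicalSpace A := ⊥
    have : DiscreteTopology A := ⟨rfl⟩
    have hcompact : IsCompact (pi univ fun i => range fun n => x n i) :=
      isCompact_univ_pi fun i => (hfin i).isCompact
    obtain ⟨z, -, φ, hφ, hz⟩ := hcompact.tendsto_subseq fun n i _ => mem_range_self n
    refine ⟨φ, hφ, z, fun i => ?_⟩
    exact tendsto_pure.1 (nhds_discrete A ▸ tendsto_pi_nhds.1 hz i)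
  exact ⟨φ, hφ, z, tendsto_pi_nhds.2 fun i => tendsto_nhds_of_eventually_eq (hz i)⟩

namespace RightFinite

variable {A : Type*} {X : Set (ℤ → A)}

theorem finite_range_succ (hR : RightFinite X) {ι : Type*} {x : ι → ℤ → A} (hx : ∀ n, x n ∈ X)
    {d : ℤ} (hd : (range fun n => x n d).Finite) : (range fun n => x n (d + 1)).Finite := by
  have hfollowers : ∀ a ∈ range fun n => x n d, {b | inLang2 X a b}.Finite := by
    rintro _ ⟨n, rfl⟩
    exact hR _ ⟨x n, hx n, d, rfl⟩
  refine (hd.biUnion hfollowers).subset ?_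
  rintro _ ⟨n, rfl⟩
  exact mem_biUnion (mem_range_self n) ⟨x n, hx n, d, rfl, rfl⟩

theorem finite_range_of_le (hR : RightFinite X) {ι : Type*} {x : ι → ℤ → A} (hx : ∀ n, x n ∈ X)
    {d i : ℤ} (hdi : d ≤ i) (hd : (range fun n => x n d).Finite) :
    (range fun n => x n i).Finite := by
  induction i, hdi using Int.leInduction with
  | base => exact hd
  | succ j _ hj => exact hR.finite_range_succ hx hj

theorem exists_subseq_tendsto [TopologicalSpace A] (hR : RightFinite X) {x : ℕ → ℤ → A}
    (hx : ∀ n, x n ∈ X) (hfin : ¬ BddBelow {d | (range fun n => x n d).Finite}) :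
    ∃ φ : ℕ → ℕ, StrictMono φ ∧ ∃ z : ℤ → A, Tendsto (fun n => x (φ n)) atTop (𝓝 z) := by
  refine exists_subseq_tendsto_of_finite_range fun i => ?_
  obtain ⟨d, hd, hdi⟩ := not_bddBelow_iff.1 hfin i
  exact hR.finite_range_of_le hx hdi.le hd

end RightFinite

end ShiftPaper

theorem nice_of_C4_general {A : Type*} [TopologicalSpace A] {X : Set (ℤ → A)} (hR : RightFinite X)
    {x : ℕ → ℤ → A} {s : ℕ → Set ℤ} {h : ℕ → ℤ → A} {S : ℕ → Set ℕ}
    (hS_inf : ∀ ℓ, (S ℓ).Infinite) (hS : Antitone S)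
    (hxS : ∀ ℓ, ∀ k ∈ S ℓ, x k ∈ X ∧ EqOn (x k) (h ℓ) (s ℓ)) (hD : ¬ BddBelow (⋃ ℓ, s ℓ)) :
    ∃ φ : ℕ → ℕ, StrictMono φ ∧ ∃ z : ℤ → A, Tendsto (fun k => x (φ k)) atTop (𝓝 z) := by
  obtain ⟨k, hk, hkS⟩ : ∃ k : ℕ → ℕ, StrictMono k ∧ ∀ n, k n ∈ S n :=
    extraction_forall_of_frequently fun n => Nat.frequently_atTop_iff_infinite.2 (hS_inf n)
  have hfin : (⋃ ℓ, s ℓ) ⊆ {d | (range fun n => x (k n) d).Finite} := by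
    refine iUnion_subset fun ℓ d hd => finite_range_of_eventually_cofinite_eq (a := h ℓ d) ?_
    rw [Nat.cofinite_eq_atTop]
    filter_upwards [eventually_ge_atTop ℓ] with n hn
    exact (hxS ℓ (k n) (hS hn (hkS n))).2 hd
  obtain ⟨ψ, hψ, z, hz⟩ := hR.exists_subseq_tendsto (fun n => (hxS n (k n) (hkS n)).1)
    (mt (BddBelow.mono hfin) hD)
  exact ⟨k ∘ ψ, hk.comp hψ, z, hz⟩

/-- STATEMENT 6 (Lemma 3.2 b) of the paper): for a right-finite shift space `X` and a
finite degree ESBC `Ψ`, a distinguished sequence admitting associated data whose total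
domain `D` is unbounded below and bounded above (class C4) has a convergent subsequence. -/
theorem nice_of_C4
    {A U : Type*} [TopologicalSpace A] [DiscreteTopology A] [Nonempty A]
    [TopologicalSpace U] [DiscreteTopology U] [Nonempty U]
    (X : Set (ℤ → A)) (hX : IsShiftSpace X)
    (hR : RightFinite X)
    (Ψ : (ℤ → A) → ℤ → U) (hΨ : IsFiniteDegreeESBC X Ψ)
    (x : ℕ → ℤ → A) (hx : ∀ k, x k ∈ X)
    (y : ℤ → U) (hconv : Tendsto (fun k => Ψ (x k)) atTop (𝓝 y))
    (s : ℕ → Finset ℤ) (h : ℕ → ℤ → A) (S : ℕ → Set ℕ)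
    (hdata : AssocData X Ψ x y s h S)
    (hD : ¬ BddBelow (⋃ ℓ, (s ℓ : Set ℤ)) ∧ BddAbove (⋃ ℓ, (s ℓ : Set ℤ))) :
    ∃ φ : ℕ → ℕ, StrictMono φ ∧ ∃ z : ℤ → A,
      Tendsto (fun k => x (φ k)) atTop (𝓝 z) := by
  obtain ⟨-, -, hS_inf, hS, hcyl, -⟩ := hdata
  exact nice_of_C4_general hR hS_inf (antitone_nat_of_succ_le hS) hcyl hD.1
end

section
/- Let A and U be nonempty sets with the discrete topology, let X ⊆ A^ℤ be a left-finite shift space, and let Ψ : X → U^ℤ be an extended sliding block code of finite degree. Let (x^k)_{k≥1} be a sequence in X with Ψ(x^k) → y in U^ℤ, and suppose there exist a sequence of A-valued functions (h_ℓ)_{ℓ≥0} on finite subsets of ℤ with h_{ℓ+1} extending h_ℓ, and a decreasing sequence (S_ℓ)_{ℓ≥0} of infinite subsets of ℕ, such that for every ℓ ≥ 0 one has x^k ∈ C_X(h_ℓ) for all k ∈ S_ℓ and Ψ(z)_j = y_j for every z ∈ C_X(h_ℓ) and |j| ≤ ℓ, and such that the set D = ⋃_{ℓ≥0} dom(h_ℓ)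 is bounded below and unbounded above in ℤ. Then (x^k)_{k≥1} has a convergent subsequence. -/
open Filter Topology Set

open ShiftPaper

/-!
A sequence of configurations that takes only finitely many values at each coordinate has a
subsequence that stabilizes at each coordinate, by compactness of a product of finite sets. A
diagonal choice `ψ n ∈ S n` makes `x ∘ ψ` eventually constant at every coordinate of `D`, and
left-finiteness carries finiteness of the set of values from a coordinate to all those on its
left. As `D` is unbounded above, this reaches every coordinate.
-/

namespace ShiftPaper

theorem finite_range_of_eventually_mem {ι α : Type*} {u : ι → α} {t : Set α} (ht : t.Finite)
    (hu : ∀ᶠ i in cofinite, u i ∈ t) : (range u).Finite := by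
  have hexc : (u '' {i | u i ∉ t}).Finite := (eventually_cofinite.1 hu).image u
  refine (ht.union hexc).subset ?_
  rintro _ ⟨i, rfl⟩
  exact or_iff_not_imp_left.2 fun hi => mem_image_of_mem u hi

theorem exists_subseq_forall_eventually_eq {ι α : Type*} [Countable ι] {x : ℕ → ι → α}
    (hfin : ∀ i, (range fun k => x k i).Finite) :
    ∃ φ : ℕ → ℕ, StrictMono φ ∧ ∃ z : ι → α, ∀ i, ∀ᶠ k in atTop, x (φ k) i = z i := by
  let _ : TopologicalSpace α := ⊥
  have _ : DiscreteTopology α := ⟨rfl⟩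
  have hK : IsCompact (univ.pi fun i => range fun k => x k i) :=
    isCompact_univ_pi fun i => (hfin i).isCompact
  obtain ⟨z, -, φ, hφ, hz⟩ := hK.tendsto_subseq fun k i _ => mem_range_self k
  refine ⟨φ, hφ, z, fun i => ?_⟩
  have hzi : Tendsto (fun k => x (φ k) i) atTop (𝓝 (z i)) := tendsto_pi_nhds.1 hz i
  rwa [nhds_discrete, tendsto_pure] at hzi

theorem LeftFinite.finite_range_of_add_one {ι A : Type*} {X : Set (ℤ → A)} (hL : LeftFinite X)
    {x : ι → ℤ → A} (hx : ∀ k, x k ∈ X) {i : ℤ} (hi : (range fun k => x k (i + 1)).Finite) :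
    (range fun k => x k i).Finite := by
  have hpred : ∀ a ∈ range (fun k => x k (i + 1)), {b | inLang2 X b a}.Finite := by
    rintro _ ⟨k, rfl⟩
    exact hL _ ⟨x k, hx k, i + 1, rfl⟩
  refine (hi.biUnion hpred).subset ?_
  rintro _ ⟨k, rfl⟩
  exact mem_biUnion (mem_range_self k) ⟨x k, hx k, i, rfl, rfl⟩

theorem LeftFinite.finite_range_of_le {ι A : Type*} {X : Set (ℤ → A)} (hL : LeftFinite X)
    {x : ι → ℤ → A} (hx : ∀ k, x k ∈ X) {i d : ℤ} (hid : i ≤ d)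
    (hd : (range fun k => x k d).Finite) : (range fun k => x k i).Finite := by
  induction i, hid using Int.leInductionDown with
  | base => exact hd
  | pred j _ ih => exact hL.finite_range_of_add_one hx (by rwa [sub_add_cancel])

end ShiftPaper

theorem nice_of_C5_general {A : Type*} [TopologicalSpace A] {X : Set (ℤ → A)} (hL : LeftFinite X)
    {x : ℕ → ℤ → A} {s : ℕ → Set ℤ} {h : ℕ → ℤ → A} {S : ℕ → Set ℕ}
    (hS : ∀ ℓ, (S ℓ).Infinite) (hanti : Antitone S)
    (hx : ∀ ℓ, ∀ k ∈ S ℓ, x k ∈ X ∧ EqOn (x k) (h ℓ) (s ℓ)) (hD : ¬ BddAbove (⋃ ℓ, s ℓ)) :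
    ∃ φ : ℕ → ℕ, StrictMono φ ∧ ∃ z : ℤ → A, Tendsto (fun k => x (φ k)) atTop (𝓝 z) := by
  obtain ⟨ψ, hψ, hψS⟩ := extraction_forall_of_frequently (P := fun ℓ k => k ∈ S ℓ)
    fun ℓ => Nat.frequently_atTop_iff_infinite.2 (hS ℓ)
  have hconst {ℓ : ℕ} {d : ℤ} (hd : d ∈ s ℓ) : ∀ᶠ n in atTop, x (ψ n) d = h ℓ d :=
    (eventually_ge_atTop ℓ).mono fun n hn => (hx ℓ (ψ n) (hanti hn (hψS n))).2 hd
  have hfin (i : ℤ) : (range fun n => x (ψ n) i).Finite := by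
    obtain ⟨d, hdD, hid⟩ := not_bddAbove_iff.1 hD i
    obtain ⟨ℓ, hd⟩ := mem_iUnion.1 hdD
    refine hL.finite_range_of_le (fun n => (hx n _ (hψS n)).1) hid.le ?_
    exact finite_range_of_eventually_mem (finite_singleton (h ℓ d))
      (Nat.cofinite_eq_atTop ▸ hconst hd)
  obtain ⟨φ, hφ, z, hz⟩ := exists_subseq_forall_eventually_eq hfin
  exact ⟨ψ ∘ φ, hψ.comp hφ, z, tendsto_pi_nhds.2 fun i => tendsto_nhds_of_eventually_eq (hz i)⟩

/-- STATEMENT 7 (Lemma 3.2 c) of the paper): for a left-finite shift space `X` and a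
finite degree ESBC `Ψ`, a distinguished sequence admitting associated data whose total
domain `D` is bounded below and unbounded above (class C5) has a convergent subsequence. -/
theorem nice_of_C5
    {A U : Type*} [TopologicalSpace A] [DiscreteTopology A] [Nonempty A]
    [TopologicalSpace U] [DiscreteTopology U] [Nonempty U]
    (X : Set (ℤ → A)) (hX : IsShiftSpace X)
    (hL : LeftFinite X)
    (Ψ : (ℤ → A) → ℤ → U) (hΨ : IsFiniteDegreeESBC X Ψ)
    (x : ℕ → ℤ → A) (hx : ∀ k, x k ∈ X)
    (y : ℤ → U) (hconv : Tendsto (fun k => Ψ (x k)) atTop (𝓝 y))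
    (s : ℕ → Finset ℤ) (h : ℕ → ℤ → A) (S : ℕ → Set ℕ)
    (hdata : AssocData X Ψ x y s h S)
    (hD : BddBelow (⋃ ℓ, (s ℓ : Set ℤ)) ∧ ¬ BddAbove (⋃ ℓ, (s ℓ : Set ℤ))) :
    ∃ φ : ℕ → ℕ, StrictMono φ ∧ ∃ z : ℤ → A,
      Tendsto (fun k => x (φ k)) atTop (𝓝 z) := by
  obtain ⟨-, -, hS, hanti, hcyl, -⟩ := hdata
  exact nice_of_C5_general hL hS (antitone_nat_of_succ_le hanti) hcyl hD.2
end

section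
/- Let A and U be nonempty sets with the discrete topology, let X ⊆ A^ℤ be a bilaterally-finite shift space, and let Ψ : X → U^ℤ be an extended sliding block code of finite degree. Then Ψ(X) is a closed subset of U^ℤ, hence a shift space over U. -/
open Filter Topology Set

open ShiftPaper

/-!
A clopen condition on one coordinate of the image cuts the code down to a compact set: since `Ψ` has
finite degree, the points `x` with `Ψ(x)_0 = u` form a finite union of members of the barrier, and
in a bilaterally-finite shift space every cylinder prescribing at least one symbol is compact,
because that symbol leaves only finitely many choices at each other coordinate. Hence `Ψ` maps the
part of `X` lying over each of the open sets `{z | z_0 = u}` onto a closed set, and these open sets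
cover `U^ℤ`. Only the barrier `{X}` has a member that need not be compact, and then `Ψ` is constant.
-/

theorem isClosed_image_of_forall_exists_mem_nhds_isCompact {α β : Type*} [TopologicalSpace α]
    [TopologicalSpace β] [T2Space β] {f : α → β} {s : Set α} (hf : ContinuousOn f s)
    (h : ∀ y, ∃ V ∈ 𝓝 y, IsCompact (s ∩ f ⁻¹' V)) : IsClosed (f '' s) := by
  refine isClosed_of_closure_subset fun y hy => ?_
  obtain ⟨V, hV, hcompact⟩ := h y
  have hclosed : IsClosed (f '' s ∩ V) := by
    rw [← image_inter_preimage]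
    exact (hcompact.image_of_continuousOn (hf.mono inter_subset_left)).isClosed
  have hfreq : ∃ᶠ z in 𝓝 y, z ∈ f '' s ∩ V := (mem_closure_iff_frequently.1 hy).and_eventually hV
  exact (hclosed.mem_of_frequently_of_tendsto hfreq tendsto_id).1

namespace ShiftPaper

section Shift

variable {A : Type*}

theorem shiftIter_add_one (n : ℤ) (x : ℤ → A) :
    shiftIter (n + 1) x = shiftIter n (shiftMap x) := by
  funext m
  simp only [shiftIter, shiftMap, add_assoc]

end Shift

section BilaterallyFinite

variable {A : Type*} {X Y : Set (ℤ → A)}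

theorem RightFinite.finite_image_eval_add_one (hX : RightFinite X) (hYX : Y ⊆ X) {i : ℤ}
    (hY : (Function.eval i '' Y).Finite) : (Function.eval (i + 1) '' Y).Finite := by
  have hfin : (⋃ a ∈ Function.eval i '' Y, {b | inLang2 X a b}).Finite := by
    refine hY.biUnion ?_
    rintro _ ⟨x, hx, rfl⟩
    exact hX _ ⟨x, hYX hx, i, rfl⟩
  refine hfin.subset ?_
  rintro _ ⟨x, hx, rfl⟩
  exact mem_biUnion (mem_image_of_mem _ hx) ⟨x, hYX hx, i, rfl, rfl⟩

theorem LeftFinite.finite_image_eval_sub_one (hX : LeftFinite X) (hYX : Y ⊆ X) {i : ℤ}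
    (hY : (Function.eval i '' Y).Finite) : (Function.eval (i - 1) '' Y).Finite := by
  have hfin : (⋃ a ∈ Function.eval i '' Y, {b | inLang2 X b a}).Finite := by
    refine hY.biUnion ?_
    rintro _ ⟨x, hx, rfl⟩
    exact hX _ ⟨x, hYX hx, i, rfl⟩
  refine hfin.subset ?_
  rintro _ ⟨x, hx, rfl⟩
  exact mem_biUnion (mem_image_of_mem _ hx)
    ⟨x, hYX hx, i - 1, rfl, congrArg x (sub_add_cancel i 1)⟩

theorem finite_image_eval_of_finite_image_eval (hr : RightFinite X) (hl : LeftFinite X)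
    (hYX : Y ⊆ X) {i : ℤ} (hY : (Function.eval i '' Y).Finite) (j : ℤ) :
    (Function.eval j '' Y).Finite := by
  induction j using Int.inductionOn' (b := i) with
  | zero => exact hY
  | succ k _ ih => exact hr.finite_image_eval_add_one hYX ih
  | pred k _ ih => exact hl.finite_image_eval_sub_one hYX ih

theorem isCompact_of_finite_image_eval [TopologicalSpace A] (hr : RightFinite X)
    (hl : LeftFinite X) (hYX : Y ⊆ X) (hclosed : IsClosed Y) {i : ℤ}
    (hY : (Function.eval i '' Y).Finite) : IsCompact Y :=
  (isCompact_univ_pi fun j =>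
    (finite_image_eval_of_finite_image_eval hr hl hYX hY j).isCompact).of_isClosed_subset hclosed
    fun _ hx _ _ => mem_image_of_mem _ hx

end BilaterallyFinite

section Cylinder

variable {A : Type*} [TopologicalSpace A] {X : Set (ℤ → A)}

theorem isClosed_cylX [T1Space A] (hX : IsClosed X) (s : Finset ℤ) (h : ℤ → A) :
    IsClosed (cylX X s h) :=
  hX.inter (isClosed_set_pi fun _ _ => isClosed_singleton)

theorem cylX_mem_nhdsWithin [DiscreteTopology A] {s : Finset ℤ} {h x : ℤ → A}
    (hx : x ∈ cylX X s h) : cylX X s h ∈ 𝓝[X] x :=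
  inter_mem_nhdsWithin X <|
    (isOpen_set_pi s.finite_toSet fun _ _ => isOpen_discrete {_}).mem_nhds hx.2

theorem isCompact_cylX [T1Space A] (hX : IsClosed X) (hr : RightFinite X) (hl : LeftFinite X)
    {s : Finset ℤ} (hs : s.Nonempty) (h : ℤ → A) : IsCompact (cylX X s h) := by
  obtain ⟨i, hi⟩ := hs
  have heval : Function.eval i '' cylX X s h ⊆ {h i} := by
    rintro _ ⟨x, hx, rfl⟩
    exact hx.2 i hi
  exact isCompact_of_finite_image_eval hr hl inter_subset_left (isClosed_cylX hX s h)
    ((finite_singleton _).subset heval)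

end Cylinder

section Barrier

variable {A : Type*} {X : Set (ℤ → A)} {B : Set (Set (ℤ → A))}

theorem IsBarrier.subset_of_mem (hB : IsBarrier X B) {C : Set (ℤ → A)} (hC : C ∈ B) : C ⊆ X := by
  obtain ⟨-, s, h, rfl⟩ := hB.1 C hC
  exact inter_subset_left

theorem IsBarrier.exists_mem (hB : IsBarrier X B) {x : ℤ → A} (hx : x ∈ X) : ∃ C ∈ B, x ∈ C :=
  (hB.2 x hx).exists

theorem IsBarrier.mem_nhdsWithin [TopologicalSpace A] [DiscreteTopology A] (hB : IsBarrier X B)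
    {C : Set (ℤ → A)} (hC : C ∈ B) {x : ℤ → A} (hx : x ∈ C) : C ∈ 𝓝[X] x := by
  obtain ⟨-, s, h, rfl⟩ := hB.1 C hC
  exact cylX_mem_nhdsWithin hx

theorem IsBarrier.isCompact_of_mem_of_ne [TopologicalSpace A] [T1Space A] (hB : IsBarrier X B)
    (hX : IsClosed X) (hr : RightFinite X) (hl : LeftFinite X) {C : Set (ℤ → A)} (hC : C ∈ B)
    (hCX : C ≠ X) : IsCompact C := by
  obtain ⟨-, s, h, rfl⟩ := hB.1 C hC
  refine isCompact_cylX hX hr hl (Finset.nonempty_iff_ne_empty.2 ?_) h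
  rintro rfl
  exact hCX (by simp [cylX])

end Barrier

section LocalRule

variable {A U : Type*} {X : Set (ℤ → A)} {Ψ : (ℤ → A) → ℤ → U} {B : Set (Set (ℤ → A))}
  {φ : Set (ℤ → A) → U}

theorem InducedBy.apply_zero (hΨ : InducedBy X Ψ B φ) {x : ℤ → A} (hx : x ∈ X)
    {C : Set (ℤ → A)} (hC : C ∈ B) (hxC : x ∈ C) : Ψ x 0 = φ C :=
  hΨ x hx 0 C hC ((shiftIter_zero x).symm ▸ hxC)

theorem InducedBy.subsingleton_image (hΨ : InducedBy X Ψ B φ) (hX : shiftMap '' X = X)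
    (hXB : X ∈ B) : (Ψ '' X).Subsingleton := by
  have hconst : ∀ x ∈ X, Ψ x = fun _ => φ X := fun x hx =>
    funext fun n => hΨ x hx n X hXB (mapsTo_shiftIter hX n hx)
  rintro _ ⟨x, hx, rfl⟩ _ ⟨x', hx', rfl⟩
  rw [hconst x hx, hconst x' hx']

theorem InducedBy.sep_apply_zero_eq (hΨ : InducedBy X Ψ B φ) (hB : IsBarrier X B) (u : U) :
    {x ∈ X | Ψ x 0 = u} = ⋃₀ {C | C ∈ B ∧ φ C = u} := by
  ext x
  constructor
  · rintro ⟨hx, rfl⟩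
    obtain ⟨C, hC, hxC⟩ := hB.exists_mem hx
    exact ⟨C, ⟨hC, (hΨ.apply_zero hx hC hxC).symm⟩, hxC⟩
  · rintro ⟨C, ⟨hC, rfl⟩, hxC⟩
    have hx := hB.subset_of_mem hC hxC
    exact ⟨hx, hΨ.apply_zero hx hC hxC⟩

end LocalRule

section ESBC

variable {A U : Type*} {X : Set (ℤ → A)} {Ψ : (ℤ → A) → ℤ → U}

theorem IsESBC.apply_eq_shiftIter_apply_zero (hΨ : IsESBC X Ψ) (hX : shiftMap '' X = X)
    {x : ℤ → A} (hx : x ∈ X) (n : ℤ) : Ψ x n = Ψ (shiftIter n x) 0 := by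
  obtain ⟨B, φ, hB, hφ⟩ := hΨ
  have hxn := mapsTo_shiftIter hX n hx
  obtain ⟨C, hC, hxC⟩ := hB.exists_mem hxn
  rw [hφ x hx n C hC hxC, hφ.apply_zero hxn hC hxC]

theorem IsESBC.map_shiftMap (hΨ : IsESBC X Ψ) (hX : shiftMap '' X = X) {x : ℤ → A}
    (hx : x ∈ X) : Ψ (shiftMap x) = shiftMap (Ψ x) := by
  funext n
  calc Ψ (shiftMap x) n = Ψ (shiftIter n (shiftMap x)) 0 :=
        hΨ.apply_eq_shiftIter_apply_zero hX (hX ▸ mem_image_of_mem shiftMap hx) n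
    _ = Ψ (shiftIter (n + 1) x) 0 := by rw [shiftIter_add_one]
    _ = shiftMap (Ψ x) n := (hΨ.apply_eq_shiftIter_apply_zero hX hx (n + 1)).symm

theorem IsESBC.shiftMap_image_image (hΨ : IsESBC X Ψ) (hX : shiftMap '' X = X) :
    shiftMap '' (Ψ '' X) = Ψ '' X :=
  calc shiftMap '' (Ψ '' X) = Ψ '' (shiftMap '' X) := by
        rw [image_image, image_image]
        exact image_congr fun x hx => (hΨ.map_shiftMap hX hx).symm
    _ = Ψ '' X := by rw [hX]

theorem IsESBC.continuousOn [TopologicalSpace A] [DiscreteTopology A] [TopologicalSpace U]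
    (hΨ : IsESBC X Ψ) (hX : shiftMap '' X = X) : ContinuousOn Ψ X := by
  have hzero : ContinuousOn (fun x => Ψ x 0) X := by
    obtain ⟨B, φ, hB, hφ⟩ := hΨ
    intro x hx
    obtain ⟨C, hC, hxC⟩ := hB.exists_mem hx
    refine continuousWithinAt_const.congr_of_eventuallyEq ?_ (hφ.apply_zero hx hC hxC)
    filter_upwards [hB.mem_nhdsWithin hC hxC] with z hzC
    exact hφ.apply_zero (hB.subset_of_mem hC hzC) hC hzC
  refine continuousOn_pi.2 fun n => ?_
  exact (hzero.comp (continuous_shiftIter n).continuousOn (mapsTo_shiftIter hX n)).congr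
    fun x hx => hΨ.apply_eq_shiftIter_apply_zero hX hx n

theorem IsFiniteDegreeESBC.isESBC (hΨ : IsFiniteDegreeESBC X Ψ) : IsESBC X Ψ := by
  obtain ⟨B, φ, hB, hφ, -⟩ := hΨ
  exact ⟨B, φ, hB, hφ⟩

theorem IsFiniteDegreeESBC.subsingleton_image_or_isCompact_sep [TopologicalSpace A] [T1Space A]
    (hΨ : IsFiniteDegreeESBC X Ψ) (hX : shiftMap '' X = X) (hclosed : IsClosed X)
    (hr : RightFinite X) (hl : LeftFinite X) :
    (Ψ '' X).Subsingleton ∨ ∀ u, IsCompact {x ∈ X | Ψ x 0 = u} := by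
  obtain ⟨B, φ, hB, hφ, hfin⟩ := hΨ
  by_cases hXB : X ∈ B
  · exact Or.inl (hφ.subsingleton_image hX hXB)
  · refine Or.inr fun u => ?_
    rw [hφ.sep_apply_zero_eq hB]
    exact (hfin u).isCompact_sUnion fun C hC =>
      hB.isCompact_of_mem_of_ne hclosed hr hl hC.1 (ne_of_mem_of_not_mem hC.1 hXB)

end ESBC

end ShiftPaper

/-- STATEMENT 9 (Theorem 3.5 a) of the paper): a finite degree ESBC on a
bilaterally-finite shift space has closed image, hence its image is a shift space. -/
theorem closed_image_of_bilaterally_finite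
    {A U : Type*} [TopologicalSpace A] [DiscreteTopology A] [Nonempty A]
    [TopologicalSpace U] [DiscreteTopology U] [Nonempty U]
    (X : Set (ℤ → A)) (hX : IsShiftSpace X)
    (hbf : RightFinite X ∧ LeftFinite X)
    (Ψ : (ℤ → A) → ℤ → U) (hΨ : IsFiniteDegreeESBC X Ψ) :
    IsClosed (Ψ '' X) ∧ IsShiftSpace (Ψ '' X) := by
  obtain ⟨hne, hclosed, hshift⟩ := hX
  obtain ⟨hr, hl⟩ := hbf
  have himage : IsClosed (Ψ '' X) := by
    rcases hΨ.subsingleton_image_or_isCompact_sep hshift hclosed hr hl with hconst | hcompact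
    · exact hconst.isClosed
    · refine isClosed_image_of_forall_exists_mem_nhds_isCompact
        (hΨ.isESBC.continuousOn hshift) fun y => ?_
      exact ⟨{z | z 0 = y 0}, (continuous_apply 0).continuousAt.preimage_mem_nhds
        (mem_nhds_discrete.2 (mem_singleton (y 0))), hcompact (y 0)⟩
  exact ⟨himage, hne.image Ψ, himage, hΨ.isESBC.shiftMap_image_image hshift⟩
end
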